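/- arXiv:2204.11761 — 5 statements merged into one kernel-verified Lean document; each statement's English description precedes it below -/
import Mathlib

section
/- Let N be a positive integer. Every matrix in the set A is an element of SL₂(ℤ), and for every M ∈ SL₂(ℤ) there exists M' ∈ A such that M'·M⁻¹ ∈ Γ₀(N); that is, A meets every right coset of Γ₀(N) in SL₂(ℤ). -/
open Matrix CongruenceSubgroup
open scoped MatrixGroups

/-- Admissibility of a choice of representative sets `R c`: for each positive divisor
`c < N` of `N`, with `v = gcd (N/c) c`, the set `R c` consists of nonnegative integers
coprime to `c` forming a complete set of representatives of `(ℤ/vℤ)ˣ`. -/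
def AdmissibleReps (N : ℕ) (R : ℕ → Set ℕ) : Prop :=
  ∀ c : ℕ, c ∣ N → 0 < c → c < N →
    (∀ a ∈ R c, Nat.Coprime a c) ∧
    ∀ u : (ZMod (Nat.gcd (N / c) c))ˣ,
      ∃! a : ℕ, a ∈ R c ∧ (a : ZMod (Nat.gcd (N / c) c)) = (u : ZMod (Nat.gcd (N / c) c))

/-- The set `A` of matrices constructed in the paper: the identity matrix, together with,
for each positive divisor `c < N` of `N` (with `v = gcd (N/c) c`), each `a ∈ R c`, and each
integer `-1 ≤ d < N/v - 1` with `a*d ≡ 1 (mod c)` whenever `a ≠ 0`, the matrix with rows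
`(a, (a*d-1)/c)` and `(c, d)`. -/
def RepSet (N : ℕ) (R : ℕ → Set ℕ) : Set (Matrix (Fin 2) (Fin 2) ℤ) :=
  {1} ∪ {M | ∃ c : ℕ, c ∣ N ∧ 0 < c ∧ c < N ∧ ∃ a ∈ R c, ∃ d : ℤ,
      -1 ≤ d ∧ d < ((N / Nat.gcd (N / c) c : ℕ) : ℤ) - 1 ∧
      (a ≠ 0 → (a : ℤ) * d ≡ 1 [ZMOD (c : ℕ)]) ∧
      M 0 0 = (a : ℤ) ∧ M 0 1 = ((a : ℤ) * d - 1) / (c : ℤ) ∧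
      M 1 0 = (c : ℤ) ∧ M 1 1 = d}

/-!
The coset of `M` under left multiplication by `Γ₀(N)` is determined by the bottom row `(r, s)` of
`M`: a matrix with bottom row `(c, d)` lies in it iff `d * r ≡ c * s` modulo `N`. If `N ∣ r`, the
identity represents the coset. Otherwise take `c = gcd r N` and divide by `c`: writing `r = c * r'`
and `N = c * n`, we need `a ∈ R c` and `d` with

  `r' * d ≡ s` modulo `n`  and  `a * d ≡ 1` modulo `c`.

Since `r'` is a unit modulo `n` and `a` one modulo `c`, such a `d` exists iff
`a * s ≡ r'` modulo `v = gcd n c`. Both `s` and `r'` are units modulo `v`, so some `a ∈ R c`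
satisfies this, and then `d` is determined modulo `lcm n c = N / v`.
-/

theorem exists_mem_Ico_modEq {m : ℤ} (hm : 0 < m) (x a : ℤ) :
    ∃ k ∈ Set.Ico x (x + m), k ≡ a [ZMOD m] := by
  refine ⟨toIcoMod hm x a, toIcoMod_mem_Ico hm x a, ?_⟩
  rw [Int.modEq_comm, Int.modEq_iff_add_fac]
  exact ⟨-toIcoDiv hm x a, by rw [toIcoMod, smul_eq_mul]; ring⟩

theorem exists_modEq_and_modEq {m n a b : ℤ} (hab : a ≡ b [ZMOD Int.gcd m n]) :
    ∃ k, k ≡ a [ZMOD m] ∧ k ≡ b [ZMOD n] := by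
  obtain ⟨x, y, hxy⟩ := (gcd_dvd_iff_exists m n).mp (Int.coe_gcd m n ▸ hab.dvd)
  refine ⟨a + m * x, Int.modEq_add_fac_self, ?_⟩
  rw [show a + m * x = b + n * -y by linear_combination -hxy]
  exact Int.modEq_add_fac_self

theorem isCoprime_of_gcd_mul_left_eq {c : ℕ} (hc : 0 < c) {x y : ℤ}
    (h : Int.gcd (c * x) (c * y) = c) : IsCoprime x y := by
  rw [Int.gcd_mul_left, Int.natAbs_natCast] at h
  exact Int.isCoprime_iff_gcd_eq_one.mpr ((mul_eq_left₀ hc.ne').mp h)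

theorem exists_mul_modEq_of_isCoprime {m a : ℤ} (ha : IsCoprime a m) (b : ℤ) :
    ∃ x, a * x ≡ b [ZMOD m] := by
  obtain ⟨u, w, huw⟩ := ha
  exact ⟨u * b, Int.modEq_iff_dvd.mpr ⟨w * b, by linear_combination -b * huw⟩⟩

theorem modEq_of_mul_modEq_mul_left {m a x y : ℤ} (ha : IsCoprime a m)
    (h : a * x ≡ a * y [ZMOD m]) : x ≡ y [ZMOD m] := by
  rw [Int.modEq_iff_dvd] at h ⊢
  rw [← mul_sub] at h
  exact ha.symm.dvd_of_dvd_mul_left h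

theorem exists_mul_modEq_and_mul_modEq {m n a b p q : ℤ} (ha : IsCoprime a m) (hb : IsCoprime b n)
    (hpq : b * p ≡ a * q [ZMOD Int.gcd m n]) :
    ∃ x, a * x ≡ p [ZMOD m] ∧ b * x ≡ q [ZMOD n] := by
  have gcd_dvd_m : (Int.gcd m n : ℤ) ∣ m := Int.gcd_dvd_left ..
  have gcd_dvd_n : (Int.gcd m n : ℤ) ∣ n := Int.gcd_dvd_right ..
  obtain ⟨y, hy⟩ := exists_mul_modEq_of_isCoprime ha p
  obtain ⟨z, hz⟩ := exists_mul_modEq_of_isCoprime hb q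
  have hyz : y ≡ z [ZMOD Int.gcd m n] := by
    refine modEq_of_mul_modEq_mul_left (a := b * a)
      ((hb.of_isCoprime_of_dvd_right gcd_dvd_n).mul_left
        (ha.of_isCoprime_of_dvd_right gcd_dvd_m)) ?_
    calc b * a * y = b * (a * y) := mul_assoc ..
      _ ≡ b * p [ZMOD Int.gcd m n] := (hy.of_dvd gcd_dvd_m).mul_left b
      _ ≡ a * q [ZMOD Int.gcd m n] := hpq
      _ ≡ a * (b * z) [ZMOD Int.gcd m n] := (hz.of_dvd gcd_dvd_n).symm.mul_left a
      _ = b * a * z := by ring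
  obtain ⟨x, hxy, hxz⟩ := exists_modEq_and_modEq hyz
  exact ⟨x, (hxy.mul_left a).trans hy, (hxz.mul_left b).trans hz⟩

theorem exists_mem_Ico_mul_modEq_and_mul_modEq {m n : ℕ} (hm : 0 < m) (hn : 0 < n)
    {a b p q : ℤ} (ha : IsCoprime a m) (hb : IsCoprime b n)
    (hpq : b * p ≡ a * q [ZMOD m.gcd n]) (l : ℤ) :
    ∃ x ∈ Set.Ico l (l + m.lcm n), a * x ≡ p [ZMOD m] ∧ b * x ≡ q [ZMOD n] := by
  obtain ⟨y, hym, hyn⟩ := exists_mul_modEq_and_mul_modEq ha hb hpq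
  obtain ⟨x, hx, hxy⟩ :=
    exists_mem_Ico_modEq (m := m.lcm n) (mod_cast Nat.lcm_pos hm hn) l y
  have hxm : x ≡ y [ZMOD m] := hxy.of_dvd (mod_cast Nat.dvd_lcm_left m n)
  have hxn : x ≡ y [ZMOD n] := hxy.of_dvd (mod_cast Nat.dvd_lcm_right m n)
  exact ⟨x, hx, (hxm.mul_left a).trans hym, (hxn.mul_left b).trans hyn⟩

theorem exists_mem_mul_modEq_of_isCoprime {v : ℕ} {reps : Set ℕ}
    (hreps : ∀ u : (ZMod v)ˣ, ∃ a ∈ reps, (a : ZMod v) = u)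
    {x y : ℤ} (hx : IsCoprime x v) (hy : IsCoprime y v) :
    ∃ a ∈ reps, a * x ≡ y [ZMOD v] := by
  obtain ⟨a, ha, hau⟩ := hreps (ZMod.unitOfIsCoprime y hy * (ZMod.unitOfIsCoprime x hx)⁻¹)
  refine ⟨a, ha, (ZMod.intCast_eq_intCast_iff ..).mp ?_⟩
  rw [Int.cast_mul, Int.cast_natCast, hau, ← ZMod.coe_unitOfIsCoprime x hx, ← Units.val_mul,
    inv_mul_cancel_right, ZMod.coe_unitOfIsCoprime]

theorem exists_mem_exists_mem_Ico_mul_modEq {n c : ℕ} (hn : 0 < n) (hc : 0 < c) {reps : Set ℕ}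
    (hcop : ∀ a ∈ reps, a.Coprime c)
    (hreps : ∀ u : (ZMod (n.gcd c))ˣ, ∃ a ∈ reps, (a : ZMod (n.gcd c)) = u)
    {r s : ℤ} (hr : IsCoprime r n) (hs : IsCoprime s c) (l : ℤ) :
    ∃ a ∈ reps, ∃ d ∈ Set.Ico l (l + n.lcm c), r * d ≡ s [ZMOD n] ∧ a * d ≡ 1 [ZMOD c] := by
  have gcd_dvd_n : (n.gcd c : ℤ) ∣ n := mod_cast n.gcd_dvd_left c
  have gcd_dvd_c : (n.gcd c : ℤ) ∣ c := mod_cast n.gcd_dvd_right c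
  obtain ⟨a, ha, has⟩ := exists_mem_mul_modEq_of_isCoprime hreps
    (hs.of_isCoprime_of_dvd_right gcd_dvd_c) (hr.of_isCoprime_of_dvd_right gcd_dvd_n)
  exact ⟨a, ha, exists_mem_Ico_mul_modEq_and_mul_modEq hn hc hr
    (Nat.isCoprime_iff_coprime.mpr (hcop a ha)) (by rwa [mul_one]) l⟩

theorem mul_inv_mem_Gamma0_iff {N : ℕ} {A B : SL(2, ℤ)} :
    A * B⁻¹ ∈ Gamma0 N ↔ A 1 1 * B 1 0 ≡ A 1 0 * B 1 1 [ZMOD N] := by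
  have entry : (A * B⁻¹) 1 0 = A 1 0 * B 1 1 - A 1 1 * B 1 0 := by
    simp [Matrix.SpecialLinearGroup.coe_mul, Matrix.adjugate_fin_two, Matrix.mul_apply,
      Fin.sum_univ_two, sub_eq_add_neg]
  rw [Gamma0_mem, entry, ZMod.intCast_zmod_eq_zero_iff_dvd, Int.modEq_iff_dvd]

/-- The matrix with bottom row `(c, d)` and upper left entry `a` that has determinant `1` when
`a * d ≡ 1` modulo `c`; the members of `RepSet` other than the identity have this form. The upper
right entry is an integer quotient, rounded when `c` does not divide `a * d - 1`. -/
def repMatrix (a c d : ℤ) : Matrix (Fin 2) (Fin 2) ℤ :=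
  !![a, (a * d - 1) / c; c, d]

theorem det_repMatrix {a c d : ℤ} (had : a * d ≡ 1 [ZMOD c]) : (repMatrix a c d).det = 1 := by
  rw [repMatrix, Matrix.det_fin_two_of, Int.ediv_mul_cancel had.symm.dvd, sub_sub_cancel]

theorem mem_repSet_iff {N : ℕ} {R : ℕ → Set ℕ} {M : Matrix (Fin 2) (Fin 2) ℤ} :
    M ∈ RepSet N R ↔ M = 1 ∨ ∃ c : ℕ, c ∣ N ∧ 0 < c ∧ c < N ∧ ∃ a ∈ R c,
      ∃ d ∈ Set.Ico (-1 : ℤ) ((N / (N / c).gcd c : ℕ) - 1),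
        (a ≠ 0 → a * d ≡ 1 [ZMOD c]) ∧ M = repMatrix a c d := by
  simp only [RepSet, repMatrix, Set.mem_union, Set.mem_singleton_iff, Set.mem_ofPred_eq,
    Set.mem_Ico, and_assoc, ← Matrix.ext_iff, Fin.forall_fin_two, Matrix.of_apply,
    Matrix.cons_val_zero, Matrix.cons_val_one]

theorem mul_modEq_one_of_ne_zero_imp {a c : ℕ} {d : ℤ} (hac : a.Coprime c)
    (had : a ≠ 0 → a * d ≡ 1 [ZMOD c]) : a * d ≡ 1 [ZMOD c] := by
  rcases eq_or_ne a 0 with rfl | ha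
  · obtain rfl : c = 1 := (Nat.coprime_zero_left c).mp hac
    exact Int.modEq_one
  · exact had ha

theorem det_eq_one_of_mem_repSet {N : ℕ} {R : ℕ → Set ℕ} (hR : AdmissibleReps N R)
    {M : Matrix (Fin 2) (Fin 2) ℤ} (hM : M ∈ RepSet N R) : M.det = 1 := by
  rcases mem_repSet_iff.mp hM with rfl | ⟨c, hcN, hc, hcltN, a, ha, d, -, had, rfl⟩
  · exact Matrix.det_one
  · exact det_repMatrix (mul_modEq_one_of_ne_zero_imp ((hR c hcN hc hcltN).1 a ha) had)

theorem exists_mem_repSet_mul_inv_mem_Gamma0_of_not_dvd {N : ℕ} (hN : 0 < N) {R : ℕ → Set ℕ}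
    (hR : AdmissibleReps N R) {M : SL(2, ℤ)} (hM : ¬ (N : ℤ) ∣ M 1 0) :
    ∃ M' : SL(2, ℤ), (M' : Matrix (Fin 2) (Fin 2) ℤ) ∈ RepSet N R ∧ M' * M⁻¹ ∈ Gamma0 N := by
  set c : ℕ := Int.gcd (M 1 0) N
  have hc : 0 < c := Int.gcd_pos_of_ne_zero_right _ (mod_cast hN.ne')
  have hcN : c ∣ N := mod_cast (Int.gcd_dvd_right (M 1 0) N)
  have hcltN : c < N := (Nat.le_of_dvd hN hcN).lt_of_ne fun h ↦ hM (h ▸ Int.gcd_dvd_left ..)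
  obtain ⟨r, hr⟩ : (c : ℤ) ∣ M 1 0 := Int.gcd_dvd_left ..
  have hN_eq : (N : ℤ) = c * (N / c : ℕ) := mod_cast (Nat.mul_div_cancel' hcN).symm
  have hrn : IsCoprime r (N / c : ℕ) :=
    isCoprime_of_gcd_mul_left_eq hc (by rw [← hr, ← hN_eq])
  have hsc : IsCoprime (M 1 1) c :=
    (M.isCoprime_row 1).symm.of_isCoprime_of_dvd_right ⟨r, hr⟩
  obtain ⟨hcop, hreps⟩ := hR c hcN hc hcltN
  obtain ⟨a, ha, d, hd, hrd, had⟩ := exists_mem_exists_mem_Ico_mul_modEq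
    (Nat.div_pos hcltN.le hc) hc hcop (fun u ↦ (hreps u).exists) hrn hsc (-1)
  rw [Nat.lcm, Nat.div_mul_cancel hcN, neg_add_eq_sub] at hd
  refine ⟨⟨repMatrix a c d, det_repMatrix had⟩,
    mem_repSet_iff.mpr (.inr ⟨c, hcN, hc, hcltN, a, ha, d, hd, fun _ ↦ had, rfl⟩),
    mul_inv_mem_Gamma0_iff.mpr ?_⟩
  change d * M 1 0 ≡ c * M 1 1 [ZMOD N]
  rw [hr, hN_eq, mul_left_comm, mul_comm d]
  exact hrd.mul_left'

/-- Every matrix in `A` lies in `SL₂(ℤ)`, and `A` meets every right coset of `Γ₀(N)`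
in `SL₂(ℤ)`. -/
theorem repSet_mem_SL_and_surj_on_cosets (N : ℕ) (hN : 0 < N)
    (R : ℕ → Set ℕ) (hR : AdmissibleReps N R) :
    (∀ M ∈ RepSet N R, M.det = 1) ∧
    ∀ M : SL(2, ℤ), ∃ M' : SL(2, ℤ),
      (M' : Matrix (Fin 2) (Fin 2) ℤ) ∈ RepSet N R ∧ M' * M⁻¹ ∈ Gamma0 N := by
  refine ⟨fun M hM ↦ det_eq_one_of_mem_repSet hR hM, fun M ↦ ?_⟩
  by_cases hM : (N : ℤ) ∣ M 1 0
  · have hM_mem : M ∈ Gamma0 N :=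
      Gamma0_mem.mpr ((ZMod.intCast_zmod_eq_zero_iff_dvd _ N).mpr hM)
    exact ⟨1, mem_repSet_iff.mpr (.inl rfl), by simpa only [one_mul] using inv_mem hM_mem⟩
  · exact exists_mem_repSet_mul_inv_mem_Gamma0_of_not_dvd hN hR hM
end

section
/- Let N be a positive integer and let M₁, M₂ ∈ A have entries (a₁, b₁; c₁, d₁) and (a₂, b₂; c₂, d₂) respectively. If there exists an integer n such that M₁·Tⁿ·M₂⁻¹ ∈ Γ₀(N), then a₁ = a₂ and c₁ = c₂; in other words, no two elements of A map ∞ to distinct Γ₀(N)-equivalent cusps. -/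
open Matrix CongruenceSubgroup
open scoped MatrixGroups

/-!
Right multiplication by `T ^ n` fixes the left column, so `γ = M₁ * T ^ n * M₂⁻¹` maps the left
column `(a₂, c₂)` of `M₂` to the left column `(a₁, c₁)` of `M₁`. Let `γ ∈ Γ₀(N)` have rows
`(α, β)` and `(N * k, δ)`. Then `c₁ ≡ δ * c₂` modulo `N` with `δ` a unit, so `gcd(c, N)` is an
invariant of the cusp; it equals `c` for a divisor `c` of `N` and `N` for the cusp `∞`, whence
`c₁ = c₂ = c`. For `c ≠ 0`, cancelling `c` in `c = N * k * a₂ + δ * c` gives `δ ≡ 1`, hence `α ≡ 1`,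
modulo `N / c`; therefore `a₁ = α * a₂ + β * c` is congruent to `a₂` modulo `gcd(N / c, c)`.
-/

section Gamma0Action

variable {N : ℕ} {γ : SL(2, ℤ)}

theorem dvd_lowerLeft_of_mem_Gamma0 (hγ : γ ∈ Gamma0 N) : (N : ℤ) ∣ γ 1 0 :=
  (ZMod.intCast_zmod_eq_zero_iff_dvd _ _).1 (Gamma0_mem.1 hγ)

theorem diag_mul_modEq_one_of_mem_Gamma0 (hγ : γ ∈ Gamma0 N) :
    γ 0 0 * γ 1 1 ≡ 1 [ZMOD N] := by
  have hdet : γ 0 0 * γ 1 1 - γ 0 1 * γ 1 0 = 1 := by rw [← det_fin_two, γ.det_coe]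
  refine (Int.modEq_iff_dvd.2 ?_).symm
  rw [show γ 0 0 * γ 1 1 - 1 = γ 0 1 * γ 1 0 by linarith]
  exact (dvd_lowerLeft_of_mem_Gamma0 hγ).mul_left _

theorem gcd_mulVec_one_of_mem_Gamma0 (hγ : γ ∈ Gamma0 N) (x : Fin 2 → ℤ) :
    Int.gcd ((γ.1 *ᵥ x) 1) N = Int.gcd (x 1) N := by
  have hunit : Int.gcd (γ 1 1) N = 1 := by
    refine Int.isCoprime_iff_gcd_eq_one.1 ?_
    obtain ⟨k, hk⟩ := (diag_mul_modEq_one_of_mem_Gamma0 hγ).dvd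
    exact ⟨γ 0 0, k, by linarith⟩
  have hlower : (γ.1 *ᵥ x) 1 = γ 1 0 * x 0 + γ 1 1 * x 1 := congrFun (mulVec_fin_two _ _) 1
  rw [hlower,
    Int.gcd_add_left_left_of_dvd _ ((dvd_lowerLeft_of_mem_Gamma0 hγ).mul_right _),
    Int.gcd_mul_right_left_of_gcd_eq_one hunit]

theorem mulVec_zero_modEq_of_mem_Gamma0 (hγ : γ ∈ Gamma0 N) {x : Fin 2 → ℤ} {m : ℤ}
    (hx : x 1 ≠ 0) (hm : x 1 * m ∣ N) (hfix : (γ.1 *ᵥ x) 1 = x 1) :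
    (γ.1 *ᵥ x) 0 ≡ x 0 [ZMOD Int.gcd m (x 1)] := by
  have hlower : γ 1 0 * x 0 + γ 1 1 * x 1 = x 1 := (congrFun (mulVec_fin_two _ _) 1).symm.trans hfix
  have lowerRight_modEq : γ 1 1 ≡ 1 [ZMOD m] := by
    refine Int.modEq_iff_dvd.2 (Int.dvd_of_mul_dvd_mul_left hx ?_)
    rw [show x 1 * (1 - γ 1 1) = γ 1 0 * x 0 by linarith]
    exact (hm.trans (dvd_lowerLeft_of_mem_Gamma0 hγ)).mul_right _
  have upperLeft_modEq : γ 0 0 ≡ 1 [ZMOD m] :=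
    calc γ 0 0 = γ 0 0 * 1 := (mul_one _).symm
      _ ≡ γ 0 0 * γ 1 1 [ZMOD m] := lowerRight_modEq.symm.mul_left _
      _ ≡ 1 [ZMOD m] := (diag_mul_modEq_one_of_mem_Gamma0 hγ).of_dvd (dvd_of_mul_left_dvd hm)
  have lowerEntry_modEq : x 1 ≡ 0 [ZMOD Int.gcd m (x 1)] :=
    Int.modEq_zero_iff_dvd.2 (Int.gcd_dvd_right _ _)
  calc (γ.1 *ᵥ x) 0 = γ 0 0 * x 0 + γ 0 1 * x 1 := congrFun (mulVec_fin_two _ _) 0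
    _ ≡ 1 * x 0 + γ 0 1 * 0 [ZMOD Int.gcd m (x 1)] :=
      ((upperLeft_modEq.of_dvd (Int.gcd_dvd_left _ _)).mul_right _).add
        (lowerEntry_modEq.mul_left _)
    _ = x 0 := by ring

end Gamma0Action

theorem mul_T_zpow_col_zero (M : SL(2, ℤ)) (n : ℤ) :
    (M * ModularGroup.T ^ n).1.col 0 = M.1.col 0 := by
  ext i
  simp [ModularGroup.coe_T_zpow, Matrix.mul_apply]

theorem mul_T_zpow_mul_inv_mulVec_col_zero (M₁ M₂ : SL(2, ℤ)) (n : ℤ) :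
    (M₁ * ModularGroup.T ^ n * M₂⁻¹).1 *ᵥ M₂.1.col 0 = M₁.1.col 0 := by
  rw [← mul_T_zpow_col_zero M₁ n]
  conv_rhs => rw [← inv_mul_cancel_right (M₁ * ModularGroup.T ^ n) M₂]
  rfl

section CuspVectors

variable {N : ℕ} {R : ℕ → Set ℕ}

/-- The left columns prescribed by `RepSet`, with `(a, c)` standing for the cusp `a / c` and
`(1, 0)` for `∞`. -/
def cuspVectors (N : ℕ) (R : ℕ → Set ℕ) : Set (Fin 2 → ℤ) :=
  {![1, 0]} ∪ {x | ∃ c ∈ N.properDivisors, ∃ a ∈ R c, x = ![(a : ℤ), (c : ℤ)]}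

theorem col_zero_mem_cuspVectors {M : Matrix (Fin 2) (Fin 2) ℤ} (hM : M ∈ RepSet N R) :
    M.col 0 ∈ cuspVectors N R := by
  rcases hM with rfl | ⟨c, hcN, -, hlt, a, ha, _, -, -, -, h00, -, h10, -⟩
  · left
    ext i
    fin_cases i <;> rfl
  · refine Or.inr ⟨c, Nat.mem_properDivisors.2 ⟨hcN, hlt⟩, a, ha, ?_⟩
    ext i
    fin_cases i
    exacts [h00, h10]

theorem AdmissibleReps.injOn_natCast (hR : AdmissibleReps N R) {c : ℕ}
    (hc : c ∈ N.properDivisors) :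
    Set.InjOn (Nat.cast : ℕ → ZMod (Nat.gcd (N / c) c)) (R c) := by
  intro a ha a' ha' haa'
  obtain ⟨hcN, hlt⟩ := Nat.mem_properDivisors.1 hc
  obtain ⟨hcoprime, hunique⟩ := hR c hcN (Nat.pos_of_mem_properDivisors hc) hlt
  have hav : a.Coprime (Nat.gcd (N / c) c) :=
    (hcoprime a ha).coprime_dvd_right (Nat.gcd_dvd_right _ _)
  exact (hunique (ZMod.unitOfCoprime a hav)).unique ⟨ha, rfl⟩ ⟨ha', haa'.symm⟩

theorem repSet_inequivalent_cusps_general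
    (hR : ∀ c ∈ N.properDivisors,
      Set.InjOn (Nat.cast : ℕ → ZMod (Nat.gcd (N / c) c)) (R c))
    {γ : SL(2, ℤ)} (hγ : γ ∈ Gamma0 N) {x y : Fin 2 → ℤ}
    (hx : x ∈ cuspVectors N R) (hy : y ∈ cuspVectors N R) (hxy : γ.1 *ᵥ x = y) :
    x = y := by
  have hgcd : Int.gcd (y 1) N = Int.gcd (x 1) N := hxy ▸ gcd_mulVec_one_of_mem_Gamma0 hγ x
  rcases hx with rfl | ⟨c, hc, a, ha, rfl⟩ <;> rcases hy with rfl | ⟨c', hc', a', ha', rfl⟩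
  · rfl
  · obtain ⟨hcN', hlt'⟩ := Nat.mem_properDivisors.1 hc'
    exact absurd (by simpa [Nat.gcd_eq_left hcN'] using hgcd : c' = N) hlt'.ne
  · obtain ⟨hcN, hlt⟩ := Nat.mem_properDivisors.1 hc
    exact absurd (by simpa [Nat.gcd_eq_left hcN] using hgcd : N = c) hlt.ne'
  · have hcN := (Nat.mem_properDivisors.1 hc).1
    obtain rfl : c' = c := by
      simpa [Nat.gcd_eq_left hcN, Nat.gcd_eq_left (Nat.mem_properDivisors.1 hc').1] using hgcd
    have hmod : (a' : ℤ) ≡ a [ZMOD Nat.gcd (N / c') c'] := by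
      have hdvd : (c' : ℤ) * (N / c' : ℕ) ∣ N := by
        exact_mod_cast (Nat.mul_div_cancel' hcN).dvd
      have hc₀ : (c' : ℤ) ≠ 0 := by exact_mod_cast (Nat.pos_of_mem_properDivisors hc).ne'
      have hupper := mulVec_zero_modEq_of_mem_Gamma0 hγ (x := ![(a : ℤ), (c' : ℤ)]) hc₀ hdvd
        (congrFun hxy 1)
      rwa [hxy] at hupper
    have haa' : a' = a :=
      hR c' hc ha' ha ((ZMod.natCast_eq_natCast_iff _ _ _).2 (Int.natCast_modEq_iff.1 hmod))
    rw [haa']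

end CuspVectors

/-- No two elements of `A` map `∞` to distinct `Γ₀(N)`-equivalent cusps: if
`M₁ Tⁿ M₂⁻¹ ∈ Γ₀(N)` for some `n`, then `M₁` and `M₂` have the same left column. -/
theorem repSet_inequivalent_cusps (N : ℕ) (hN : 0 < N)
    (R : ℕ → Set ℕ) (hR : AdmissibleReps N R)
    (M₁ M₂ : SL(2, ℤ))
    (h₁ : (M₁ : Matrix (Fin 2) (Fin 2) ℤ) ∈ RepSet N R)
    (h₂ : (M₂ : Matrix (Fin 2) (Fin 2) ℤ) ∈ RepSet N R)
    (h : ∃ n : ℤ, M₁ * ModularGroup.T ^ n * M₂⁻¹ ∈ Gamma0 N) :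
    (M₁ : Matrix (Fin 2) (Fin 2) ℤ) 0 0 = (M₂ : Matrix (Fin 2) (Fin 2) ℤ) 0 0 ∧
    (M₁ : Matrix (Fin 2) (Fin 2) ℤ) 1 0 = (M₂ : Matrix (Fin 2) (Fin 2) ℤ) 1 0 := by
  obtain ⟨n, hn⟩ := h
  have hcol := repSet_inequivalent_cusps_general (fun _ hc ↦ hR.injOn_natCast hc) hn
    (col_zero_mem_cuspVectors h₂) (col_zero_mem_cuspVectors h₁)
    (mul_T_zpow_mul_inv_mulVec_col_zero M₁ M₂ n)
  exact ⟨congrFun hcol.symm 0, congrFun hcol.symm 1⟩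
end

section
/- Let N be a positive integer, p a prime not dividing N, and n, a, b integers satisfying b ≡ n(1−p) (mod N) and ab ≡ an − 1 (mod p). Let M be the matrix with rows (0, −1) and (1, n), and let U_a, U_b be the matrices with rows (1, a),(0, p) and (1, b),(0, p) respectively. Then p divides ab − an(1−p) + 1, the matrix M' with rows (p, −a) and (n(1−p) − b, (ab − an(1−p) + 1)/p) has integer entries and determinant 1, its lower-left entry is divisible by N (so M' ∈ Γ₀(N)), and M'·U_a·M = M·U_b. -/
open Matrix

/-!
Put `c = n(1 - p) - b`. Both `M * U_b * M⁻¹` and `M' * U_a` equal the lower triangular matrix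
`(p, 0; c, 1)`: the former by direct computation, the latter because its lower-right entry is
exactly `det M'`. The lower-right entry of `M'` is the one that makes this determinant `1`, and the
congruence modulo `p` says that it is an integer.
-/

section CommRing

variable {R : Type*} [CommRing R]

theorem mul_upperTriangular_eq_lowerTriangular_of_det_eq_one {p a c d : R}
    (hdet : !![p, -a; c, d].det = 1) :
    !![p, -a; c, d] * !![1, a; 0, p] = !![p, 0; c, 1] := by
  have lower_right : c * a + d * p = 1 := by
    rw [det_fin_two_of] at hdet
    linear_combination hdet
  have upper_right : p * a + -(a * p) = 0 := by ring
  simp [lower_right, upper_right]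

theorem lowerTriangular_mul_eq_mul_upperTriangular (p n b : R) :
    !![p, 0; n * (1 - p) - b, 1] * !![0, -1; 1, n] = !![0, -1; 1, n] * !![1, b; 0, p] := by
  have lower_right : (n * (1 - p) - b) * -1 + n = b + n * p := by ring
  simpa using lower_right

end CommRing

theorem det_of_one_sub_mul_div_eq_one {K : Type*} [Field K] {p : K} (hp : p ≠ 0) (a c : K) :
    !![p, -a; c, (1 - a * c) / p].det = 1 := by
  rw [det_fin_two_of, mul_div_cancel₀ _ hp]
  ring

theorem dvd_mul_sub_mul_one_sub_add_one_iff {p n a b : ℤ} :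
    p ∣ a * b - a * n * (1 - p) + 1 ↔ a * b ≡ a * n - 1 [ZMOD p] := by
  have split_multiple :
      a * b - a * n * (1 - p) + 1 = (a * b - (a * n - 1)) + p * (a * n) := by ring
  rw [Int.modEq_comm, Int.modEq_iff_dvd, split_multiple, dvd_add_left (dvd_mul_right p _)]

theorem hecke_matrix_identity_general {K : Type*} [Field K] {N p n a b : ℤ} (hp : (p : K) ≠ 0)
    (hb : b ≡ n * (1 - p) [ZMOD N]) (hab : a * b ≡ a * n - 1 [ZMOD p])
    {M Ua Ub M' : Matrix (Fin 2) (Fin 2) K}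
    (hM : M = !![0, -1; 1, (n : K)])
    (hUa : Ua = !![1, (a : K); 0, (p : K)])
    (hUb : Ub = !![1, (b : K); 0, (p : K)])
    (hM' : M' = !![(p : K), -(a : K);
        (n : K) * (1 - (p : K)) - (b : K),
        ((a * b - a * n * (1 - p) + 1 : ℤ) : K) / (p : K)]) :
    p ∣ a * b - a * n * (1 - p) + 1 ∧
    M'.det = 1 ∧
    N ∣ n * (1 - p) - b ∧
    M' * Ua * M = M * Ub := by
  have numerator_eq : ((a * b - a * n * (1 - p) + 1 : ℤ) : K) =
      1 - (a : K) * ((n : K) * (1 - (p : K)) - (b : K)) := by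
    push_cast
    ring
  have det_eq_one : M'.det = 1 := by
    rw [hM', numerator_eq]
    exact det_of_one_sub_mul_div_eq_one hp _ _
  refine ⟨dvd_mul_sub_mul_one_sub_add_one_iff.mpr hab, det_eq_one, hb.dvd, ?_⟩
  rw [hM'] at det_eq_one
  rw [hM', hUa, hM, hUb, mul_upperTriangular_eq_lowerTriangular_of_det_eq_one det_eq_one,
    lowerTriangular_mul_eq_mul_upperTriangular]

/-- Matrix identity underlying the Hecke operator computation: given `b ≡ n(1−p) (mod N)`
and `ab ≡ an − 1 (mod p)`, the matrix `M' = (p, −a; n(1−p)−b, (ab−an(1−p)+1)/p)` has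
integer entries, determinant `1`, lower-left entry divisible by `N`, and satisfies
`M'·U_a·M = M·U_b`. -/
theorem hecke_matrix_identity (N : ℕ) (hN : 0 < N) (p : ℕ) (hp : p.Prime)
    (hpN : ¬ (p : ℤ) ∣ (N : ℤ)) (n a b : ℤ)
    (hb : b ≡ n * (1 - (p : ℤ)) [ZMOD (N : ℤ)])
    (hab : a * b ≡ a * n - 1 [ZMOD (p : ℤ)])
    (M Ua Ub M' : Matrix (Fin 2) (Fin 2) ℚ)
    (hM : M = !![0, -1; 1, (n : ℚ)])
    (hUa : Ua = !![1, (a : ℚ); 0, (p : ℚ)])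
    (hUb : Ub = !![1, (b : ℚ); 0, (p : ℚ)])
    (hM' : M' = !![(p : ℚ), -(a : ℚ);
        (n : ℚ) * (1 - (p : ℚ)) - (b : ℚ),
        ((a * b - a * n * (1 - (p : ℤ)) + 1 : ℤ) : ℚ) / (p : ℚ)]) :
    ((p : ℤ) ∣ a * b - a * n * (1 - (p : ℤ)) + 1) ∧
    M'.det = 1 ∧
    ((N : ℤ) ∣ n * (1 - (p : ℤ)) - b) ∧
    M' * Ua * M = M * Ub := by
  have hp0 : ((p : ℤ) : ℚ) ≠ 0 := mod_cast hp.ne_zero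
  exact hecke_matrix_identity_general hp0 hb hab hM hUa hUb hM'
end

section
/- Let N be a positive integer, χ a Dirichlet character modulo N, and f : ℍ → ℂ automorphic of level N and character χ. Let p be a prime not dividing N, and n, a, b integers satisfying b ≡ n(1−p) (mod N) and ab ≡ an − 1 (mod p). Let M be the matrix with rows (0, −1) and (1, n), and let U_a, U_b be the matrices with rows (1, a),(0, p) and (1, b),(0, p) respectively. Then for every z ∈ ℍ, f(U_a·(M·z)) = χ(p)·f(M·(U_b·z)), where · denotes the Möbius action. -/
open Matrix CongruenceSubgroup UpperHalfPlane
open scoped MatrixGroups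

/-- The Möbius action of an integer matrix on a complex number. -/
noncomputable def moebius (g : Matrix (Fin 2) (Fin 2) ℤ) (z : ℂ) : ℂ :=
  ((g 0 0 : ℂ) * z + (g 0 1 : ℂ)) / ((g 1 0 : ℂ) * z + (g 1 1 : ℂ))

/-- `f : ℍ → ℂ` is automorphic of level `N` and character `χ` if
`f(γ·z) = χ(d_γ)·f(z)` for all `γ ∈ Γ₀(N)`. -/
def IsAutomorphic (N : ℕ) (χ : DirichletCharacter ℂ N) (f : ℍ → ℂ) : Prop :=
  ∀ γ ∈ Gamma0 N, ∀ z : ℍ,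
    f (γ • z) = χ (((γ : Matrix (Fin 2) (Fin 2) ℤ) 1 1 : ZMod N)) * f z

/-!
The matrix `γ = U_a M (M U_b)⁻¹` has determinant `1` and lower row `(b - n(1 - p), p)`. It is
integral because `ab ≡ an - 1 (mod p)`, and it lies in `Γ₀(N)` because `b ≡ n(1 - p) (mod N)`.
Hence `U_a·(M·z) = γ·(M·(U_b·z))`, and automorphy under `γ` contributes the factor `χ(p)`.
-/

theorem moebius_denom_ne_zero {g : Matrix (Fin 2) (Fin 2) ℤ} (hg : g.det ≠ 0)
    (z : ℍ) : (g 1 0 : ℂ) * z + g 1 1 ≠ 0 := by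
  have row_ne_zero : (fun j ↦ (g 1 j : ℝ)) ≠ 0 := fun h ↦
    hg <| det_eq_zero_of_row_eq_zero 1 fun j ↦ Int.cast_eq_zero.mp (congrFun h j)
  simpa using z.linear_ne_zero row_ne_zero

theorem moebius_mul (g h : Matrix (Fin 2) (Fin 2) ℤ) {z : ℂ}
    (hz : (h 1 0 : ℂ) * z + h 1 1 ≠ 0) :
    moebius (g * h) z = moebius g (moebius h z) := by
  simp only [moebius, mul_apply, Fin.sum_univ_two, Int.cast_add, Int.cast_mul]
  rw [← mul_div_mul_right _ (_ * (_ / _) + _) hz]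
  congr 1 <;> field_simp <;> ring

theorem moebius_mul_coe (g : Matrix (Fin 2) (Fin 2) ℤ) {h : Matrix (Fin 2) (Fin 2) ℤ}
    (hh : h.det ≠ 0) (z : ℍ) :
    moebius (g * h) z = moebius g (moebius h z) :=
  moebius_mul g h (moebius_denom_ne_zero hh z)

theorem coe_smul_eq_moebius (γ : SL(2, ℤ)) (z : ℍ) :
    ((γ • z : ℍ) : ℂ) = moebius γ z := by
  simp [moebius, specialLinearGroup_apply]

theorem IsAutomorphic.apply_eq_of_moebius {N : ℕ} {χ : DirichletCharacter ℂ N} {f : ℍ → ℂ}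
    (hf : IsAutomorphic N χ f) {γ : SL(2, ℤ)} (hγ : γ ∈ Gamma0 N)
    {g : Matrix (Fin 2) (Fin 2) ℤ} (hg : g.det ≠ 0) {z w₁ w₂ : ℍ}
    (hw₁ : (w₁ : ℂ) = moebius (γ * g) z) (hw₂ : (w₂ : ℂ) = moebius g z) :
    f w₁ = χ ((γ 1 1 : ℤ) : ZMod N) * f w₂ := by
  have w₁_eq : w₁ = γ • w₂ := UpperHalfPlane.ext <| by
    rw [hw₁, moebius_mul_coe _ hg, ← hw₂, coe_smul_eq_moebius]
  rw [w₁_eq, hf γ hγ]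

theorem exists_mem_Gamma0_factorization {N : ℕ} {p n a b : ℤ} (hb : b ≡ n * (1 - p) [ZMOD N])
    (hab : a * b ≡ a * n - 1 [ZMOD p]) :
    ∃ γ ∈ Gamma0 N, γ 1 1 = p ∧
      !![1, a; 0, p] * !![0, -1; 1, n] = (γ : Matrix (Fin 2) (Fin 2) ℤ) *
        (!![0, -1; 1, n] * !![1, b; 0, p]) := by
  obtain ⟨k, hk⟩ := hab.symm.dvd
  let γ : SL(2, ℤ) := ⟨!![k + a * n, a; b - n * (1 - p), p], by
    rw [det_fin_two_of]
    linear_combination -hk⟩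
  refine ⟨γ, ?_, rfl, ?_⟩
  · rw [Gamma0_mem, ZMod.intCast_zmod_eq_zero_iff_dvd]
    exact hb.symm.dvd
  · have upper_right : -1 + a * n = -((k + a * n) * p) + a * (b + n * p) := by
      linear_combination -hk
    have lower_right : p * n = -((b - n * (1 - p)) * p) + p * (b + n * p) := by ring
    simpa [γ] using ⟨upper_right, lower_right⟩

theorem automorphic_hecke_relation_general {N : ℕ} {χ : DirichletCharacter ℂ N} {f : ℍ → ℂ}
    (hf : IsAutomorphic N χ f) {p : ℕ} (hp : p ≠ 0) {n a b : ℤ}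
    (hb : b ≡ n * (1 - (p : ℤ)) [ZMOD (N : ℤ)])
    (hab : a * b ≡ a * n - 1 [ZMOD (p : ℤ)])
    {z w₁ w₂ : ℍ}
    (hw₁ : (w₁ : ℂ) = moebius !![1, a; 0, (p : ℤ)] (moebius !![0, -1; 1, n] (z : ℂ)))
    (hw₂ : (w₂ : ℂ) = moebius !![0, -1; 1, n] (moebius !![1, b; 0, (p : ℤ)] (z : ℂ))) :
    f w₁ = χ (p : ZMod N) * f w₂ := by
  obtain ⟨γ, hγ, γ_lowerRight, factorization⟩ := exists_mem_Gamma0_factorization hb hab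
  have det_M : det !![0, -1; 1, n] ≠ 0 := by simp
  have det_U : det !![1, b; 0, (p : ℤ)] ≠ 0 := by simpa using hp
  have det_MU : det (!![0, -1; 1, n] * !![1, b; 0, (p : ℤ)]) ≠ 0 := by
    rw [det_mul]
    exact mul_ne_zero det_M det_U
  rw [← moebius_mul_coe _ det_M, factorization] at hw₁
  rw [← moebius_mul_coe _ det_U] at hw₂
  simpa only [γ_lowerRight, Int.cast_natCast] using hf.apply_eq_of_moebius hγ det_MU hw₁ hw₂

/-- For `f` automorphic of level `N` and character `χ`, with `b ≡ n(1−p) (mod N)` and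
`ab ≡ an − 1 (mod p)`, one has `f(U_a·(M·z)) = χ(p)·f(M·(U_b·z))` for every `z ∈ ℍ`,
where `M = (0,−1;1,n)`, `U_a = (1,a;0,p)`, `U_b = (1,b;0,p)`. -/
theorem automorphic_hecke_relation (N : ℕ) (hN : 0 < N)
    (χ : DirichletCharacter ℂ N) (f : ℍ → ℂ) (hf : IsAutomorphic N χ f)
    (p : ℕ) (hp : p.Prime) (hpN : ¬ (p : ℤ) ∣ (N : ℤ)) (n a b : ℤ)
    (hb : b ≡ n * (1 - (p : ℤ)) [ZMOD (N : ℤ)])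
    (hab : a * b ≡ a * n - 1 [ZMOD (p : ℤ)])
    (z w₁ w₂ : ℍ)
    (hw₁ : (w₁ : ℂ) = moebius !![1, a; 0, (p : ℤ)] (moebius !![0, -1; 1, n] (z : ℂ)))
    (hw₂ : (w₂ : ℂ) = moebius !![0, -1; 1, n] (moebius !![1, b; 0, (p : ℤ)] (z : ℂ))) :
    f w₁ = χ ((p : ℕ) : ZMod N) * f w₂ :=
  automorphic_hecke_relation_general hf hp.ne_zero hb hab hw₁ hw₂
end

section
/- Let N be a positive integer, c a positive divisor of N, and v = gcd(c, N/c). Let M ∈ SL₂(ℤ) have entries (a, b; c, d), and let d' be an integer with d' ≡ d (mod N/v). Then c divides d' − d; moreover, setting n = (d' − d)/c, the integer n is a multiple of N/(c·v), and M·Tⁿ·M⁻¹ ∈ Γ₀(N). The matrix M·Tⁿ has bottom row (c, d'). -/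
open Matrix CongruenceSubgroup
open scoped MatrixGroups

/-!
Write `(c, d)` for the bottom row of `M`. Multiplying by `Tⁿ` on the right changes it to
`(c, n c + d)`, and the lower-left entry of `M Tⁿ M⁻¹` is `-n c²`. So `M Tⁿ M⁻¹ ∈ Γ₀(N)` if and
only if `N ∣ c² n`, which for `c ∣ N` and `v = gcd(c, N/c)` reduces to `N/c ∣ v n`, that is, to
`N/(c v) ∣ n`. As `N/v = c · N/(c v)`, a shift of `d` by a multiple of `N/v` is a shift by `n c`
with `n` a multiple of `N/(c v)`.
-/

/-- The width of a cusp `a/c` of `Γ₀(N)`, where `a` is coprime to `c`. The formula is meaningful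
when `c` is a positive divisor of `N`; the divisions are those of `ℕ`. -/
def cuspWidth (N c : ℕ) : ℕ :=
  N / (c * Nat.gcd c (N / c))

section CuspWidth

variable {N c : ℕ}

theorem mul_gcd_div_dvd (hcN : c ∣ N) : c * Nat.gcd c (N / c) ∣ N :=
  Nat.mul_dvd_of_dvd_div hcN (Nat.gcd_dvd_right c (N / c))

theorem mul_cuspWidth (hcN : c ∣ N) : c * cuspWidth N c = N / Nat.gcd c (N / c) := by
  have hgcd : Nat.gcd c (N / c) ∣ N / c := Nat.gcd_dvd_right c (N / c)
  rw [cuspWidth, ← Nat.div_div_eq_div_mul, ← Nat.mul_div_assoc c hgcd, Nat.mul_div_cancel' hcN]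

theorem cuspWidth_dvd_iff (hc : 0 < c) (hcN : c ∣ N) {n : ℤ} :
    (cuspWidth N c : ℤ) ∣ n ↔ (N : ℤ) ∣ (c : ℤ) ^ 2 * n := by
  have hc_ne : (c : ℤ) ≠ 0 := by exact_mod_cast hc.ne'
  have hgcd_ne : (Nat.gcd c (N / c) : ℤ) ≠ 0 := by
    exact_mod_cast (Nat.gcd_pos_of_pos_left (N / c) hc).ne'
  have hN : (N : ℤ) = c * (N / c : ℕ) := by exact_mod_cast (Nat.mul_div_cancel' hcN).symm
  calc (cuspWidth N c : ℤ) ∣ n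
      ↔ (N : ℤ) ∣ c * Nat.gcd c (N / c) * n := by
        rw [cuspWidth, Int.natCast_div, Nat.cast_mul]
        exact Int.ediv_dvd_iff_dvd_mul (by exact_mod_cast mul_gcd_div_dvd hcN)
          (mul_ne_zero hc_ne hgcd_ne)
    _ ↔ ((N / c : ℕ) : ℤ) ∣ Nat.gcd (N / c) c * n := by
        rw [hN, mul_assoc, mul_dvd_mul_iff_left hc_ne, Nat.gcd_comm]
    _ ↔ ((N / c : ℕ) : ℤ) ∣ c * n := by
        rw [← Int.gcd_natCast_natCast, Int.dvd_gcd_mul_iff_dvd_mul]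
    _ ↔ (N : ℤ) ∣ (c : ℤ) ^ 2 * n := by
        rw [hN, sq, mul_assoc, mul_dvd_mul_iff_left hc_ne]

end CuspWidth

section TranslationPowers

variable (M : SL(2, ℤ)) (n : ℤ)

theorem mul_T_zpow_apply_zero (i : Fin 2) : (M * ModularGroup.T ^ n) i 0 = M i 0 := by
  simp [ModularGroup.coe_T_zpow, Matrix.mul_apply]

theorem mul_T_zpow_apply_one (i : Fin 2) :
    (M * ModularGroup.T ^ n) i 1 = M i 0 * n + M i 1 := by
  simp [ModularGroup.coe_T_zpow, Matrix.mul_apply]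

theorem conj_T_zpow_apply_one_zero :
    (M * ModularGroup.T ^ n * M⁻¹) 1 0 = -(M 1 0 ^ 2 * n) := by
  rw [Matrix.SpecialLinearGroup.coe_mul, Matrix.mul_apply, Fin.sum_univ_two,
    mul_T_zpow_apply_zero, mul_T_zpow_apply_one, Matrix.SpecialLinearGroup.coe_inv,
    adjugate_fin_two]
  simp only [of_apply, cons_val_zero, cons_val_one]
  ring

variable {M n}

theorem conj_T_zpow_mem_Gamma0_iff {N : ℕ} :
    M * ModularGroup.T ^ n * M⁻¹ ∈ Gamma0 N ↔ (N : ℤ) ∣ M 1 0 ^ 2 * n := by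
  rw [Gamma0_mem, ZMod.intCast_zmod_eq_zero_iff_dvd, conj_T_zpow_apply_one_zero, dvd_neg]

theorem conj_T_zpow_mem_Gamma0_iff_cuspWidth_dvd {N c : ℕ} (hc : 0 < c) (hcN : c ∣ N)
    (hMc : M 1 0 = c) :
    M * ModularGroup.T ^ n * M⁻¹ ∈ Gamma0 N ↔ (cuspWidth N c : ℤ) ∣ n := by
  rw [conj_T_zpow_mem_Gamma0_iff, hMc, cuspWidth_dvd_iff hc hcN]

end TranslationPowers

/-- Let `c` be a positive divisor of `N`, `v = gcd(c, N/c)`, and let `M ∈ SL₂(ℤ)` have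
bottom row `(c, d)`. If `d' ≡ d (mod N/v)`, then `c ∣ d' − d`, the integer
`n = (d' − d)/c` is a multiple of the cusp width `N/(c·v)`, `M·Tⁿ·M⁻¹ ∈ Γ₀(N)`, and
`M·Tⁿ` has bottom row `(c, d')`. -/
theorem translate_to_canonical_bottom_row (N : ℕ) (hN : 0 < N)
    (c : ℕ) (hc : 0 < c) (hcN : c ∣ N)
    (M : SL(2, ℤ)) (hMc : (M : Matrix (Fin 2) (Fin 2) ℤ) 1 0 = (c : ℤ))
    (d' : ℤ)
    (hd' : d' ≡ (M : Matrix (Fin 2) (Fin 2) ℤ) 1 1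
      [ZMOD ((N / Nat.gcd c (N / c) : ℕ) : ℤ)]) :
    (c : ℤ) ∣ d' - (M : Matrix (Fin 2) (Fin 2) ℤ) 1 1 ∧
    ((N / (c * Nat.gcd c (N / c)) : ℕ) : ℤ) ∣
      (d' - (M : Matrix (Fin 2) (Fin 2) ℤ) 1 1) / (c : ℤ) ∧
    M * ModularGroup.T ^ ((d' - (M : Matrix (Fin 2) (Fin 2) ℤ) 1 1) / (c : ℤ)) * M⁻¹ ∈
      Gamma0 N ∧
    ((M * ModularGroup.T ^ ((d' - (M : Matrix (Fin 2) (Fin 2) ℤ) 1 1) / (c : ℤ)) :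
        SL(2, ℤ)) : Matrix (Fin 2) (Fin 2) ℤ) 1 0 = (c : ℤ) ∧
    ((M * ModularGroup.T ^ ((d' - (M : Matrix (Fin 2) (Fin 2) ℤ) 1 1) / (c : ℤ)) :
        SL(2, ℤ)) : Matrix (Fin 2) (Fin 2) ℤ) 1 1 = d' := by
  have hdvd : (c : ℤ) * cuspWidth N c ∣ d' - M 1 1 := by
    rw [← mul_cuspWidth hcN, Nat.cast_mul] at hd'
    exact hd'.symm.dvd
  have hc_dvd : (c : ℤ) ∣ d' - M 1 1 := dvd_of_mul_right_dvd hdvd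
  have hwidth_dvd : (cuspWidth N c : ℤ) ∣ (d' - M 1 1) / c := Int.dvd_div_of_mul_dvd hdvd
  refine ⟨hc_dvd, hwidth_dvd, ?_, ?_, ?_⟩
  · exact (conj_T_zpow_mem_Gamma0_iff_cuspWidth_dvd hc hcN hMc).mpr hwidth_dvd
  · rw [mul_T_zpow_apply_zero, hMc]
  · rw [mul_T_zpow_apply_one, hMc, Int.mul_ediv_cancel' hc_dvd, sub_add_cancel]
end
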